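/- arXiv:2504.10120 — 2 statements merged into one kernel-verified Lean document; each statement's English description precedes it below -/
import Mathlib

section
/- Let Ω be a finite probability space, and let X : Ω → 𝒳 and Z : Ω → 𝒵 be random variables with 𝒳, 𝒵 finite and nonempty. Then H̃∞(X | Z) ≥ H∞(X) − log₂|𝒵|. -/
open Finset Real

/-- Probability of an event `E` under the weight function `p` on a finite sample space. -/
noncomputable def pr {Ω : Type*} [Fintype Ω] (p : Ω → ℝ) (E : Set Ω) : ℝ :=
  ∑ ω, E.indicator p ω

/-- `P[X = x]`. -/
noncomputable def prEq {Ω 𝒳 : Type*} [Fintype Ω] (p : Ω → ℝ) (X : Ω → 𝒳) (x : 𝒳) : ℝ :=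
  pr p {ω | X ω = x}

/-- `P[X = x | Y = y]`, taken to be `0` when `P[Y = y] = 0`. -/
noncomputable def condProb {Ω 𝒳 𝒴 : Type*} [Fintype Ω]
    (p : Ω → ℝ) (X : Ω → 𝒳) (x : 𝒳) (Y : Ω → 𝒴) (y : 𝒴) : ℝ :=
  if prEq p Y y = 0 then 0 else pr p {ω | X ω = x ∧ Y ω = y} / prEq p Y y

/-- Average min-entropy `H̃∞(X | Y)`. -/
noncomputable def avgMinEntropy {Ω 𝒳 𝒴 : Type*} [Fintype Ω]
    [Fintype 𝒳] [Nonempty 𝒳] [Fintype 𝒴]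
    (p : Ω → ℝ) (X : Ω → 𝒳) (Y : Ω → 𝒴) : ℝ :=
  - Real.logb 2 (∑ y : 𝒴, prEq p Y y *
      (Finset.univ.sup' Finset.univ_nonempty fun x : 𝒳 => condProb p X x Y y))

/-- Min-entropy `H∞(X)`. -/
noncomputable def minEntropy {Ω 𝒳 : Type*} [Fintype Ω] [Fintype 𝒳] [Nonempty 𝒳]
    (p : Ω → ℝ) (X : Ω → 𝒳) : ℝ :=
  - Real.logb 2 (Finset.univ.sup' Finset.univ_nonempty fun x : 𝒳 => prEq p X x)

theorem pr_mono_aux {Ω : Type*} [Fintype Ω] (p : Ω → ℝ) (hp : ∀ ω, 0 ≤ p ω)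
    {A B : Set Ω} (h : A ⊆ B) : pr p A ≤ pr p B :=
  Finset.sum_le_sum fun ω _ => Set.indicator_le_indicator_of_subset h hp ω

theorem pr_nonneg_aux {Ω : Type*} [Fintype Ω] (p : Ω → ℝ) (hp : ∀ ω, 0 ≤ p ω)
    (A : Set Ω) : 0 ≤ pr p A :=
  Finset.sum_nonneg fun ω _ => Set.indicator_nonneg (fun ω _ => hp ω) ω

theorem le_pr_aux {Ω : Type*} [Fintype Ω] (p : Ω → ℝ) (hp : ∀ ω, 0 ≤ p ω)
    (A : Set Ω) (ω : Ω) (h : ω ∈ A) : p ω ≤ pr p A := by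
  have h1 := Finset.single_le_sum (f := fun ω => A.indicator p ω)
    (fun ω _ => Set.indicator_nonneg (fun ω _ => hp ω) ω) (Finset.mem_univ ω)
  simpa [pr, Set.indicator_of_mem h] using h1

theorem mul_condProb_aux {Ω 𝒳 𝒴 : Type*} [Fintype Ω] (p : Ω → ℝ) (hp : ∀ ω, 0 ≤ p ω)
    (X : Ω → 𝒳) (x : 𝒳) (Y : Ω → 𝒴) (y : 𝒴) :
    prEq p Y y * condProb p X x Y y = pr p {ω | X ω = x ∧ Y ω = y} := by
  unfold condProb
  split_ifs with h
  · have h1 : pr p {ω | X ω = x ∧ Y ω = y} ≤ prEq p Y y :=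
      pr_mono_aux p hp fun ω hω => hω.2
    have h2 := pr_nonneg_aux p hp {ω | X ω = x ∧ Y ω = y}
    linarith
  · field_simp

theorem stmt_5 {Ω 𝒳 𝒵 : Type*} [Fintype Ω]
    [Fintype 𝒳] [Nonempty 𝒳] [Fintype 𝒵] [Nonempty 𝒵]
    (p : Ω → ℝ) (hp : ∀ ω, 0 ≤ p ω) (hsum : ∑ ω, p ω = 1)
    (X : Ω → 𝒳) (Z : Ω → 𝒵) :
    avgMinEntropy p X Z ≥ minEntropy p X - Real.logb 2 (Fintype.card 𝒵) := by
  unfold avgMinEntropy minEntropy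
  set M := Finset.univ.sup' Finset.univ_nonempty fun x : 𝒳 => prEq p X x with hM
  set S := ∑ y : 𝒵, prEq p Z y *
      (Finset.univ.sup' Finset.univ_nonempty fun x : 𝒳 => condProb p X x Z y) with hS
  have hle : ∀ x, prEq p X x ≤ M := fun x =>
    Finset.le_sup' (fun x : 𝒳 => prEq p X x) (Finset.mem_univ x)
  have hlow : ∀ x y, pr p {ω | X ω = x ∧ Z ω = y} ≤ prEq p Z y *
      (Finset.univ.sup' Finset.univ_nonempty fun x : 𝒳 => condProb p X x Z y) := by
    intro x y
    rw [← mul_condProb_aux p hp]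
    exact mul_le_mul_of_nonneg_left
      (Finset.le_sup' (fun x : 𝒳 => condProb p X x Z y) (Finset.mem_univ x))
      (pr_nonneg_aux p hp _)
  have hSM : S ≤ Fintype.card 𝒵 * M := by
    have : ∀ y ∈ (Finset.univ : Finset 𝒵), prEq p Z y *
      (Finset.univ.sup' Finset.univ_nonempty fun x : 𝒳 => condProb p X x Z y) ≤ M := by
      intro y _
      obtain ⟨x, _, hx⟩ := Finset.exists_mem_eq_sup' (Finset.univ_nonempty (α := 𝒳))
        (fun x : 𝒳 => condProb p X x Z y)
      rw [hx, mul_condProb_aux p hp]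
      exact (pr_mono_aux p hp fun ω hω => hω.1).trans (hle x)
    simpa using Finset.sum_le_card_nsmul _ _ _ this
  obtain ⟨ω, hω⟩ : ∃ ω, 0 < p ω := by
    by_contra! h
    have : ∑ ω, p ω ≤ 0 := Finset.sum_nonpos fun ω _ => h ω
    linarith
  have hSpos : 0 < S := by
    refine lt_of_lt_of_le (hω.trans_le (le_pr_aux p hp _ ω ?_))
      ((hlow (X ω) (Z ω)).trans (Finset.single_le_sum (f := fun y : 𝒵 => prEq p Z y *
      (Finset.univ.sup' Finset.univ_nonempty fun x : 𝒳 => condProb p X x Z y))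
        (fun y _ => (pr_nonneg_aux p hp _).trans (hlow (X ω) y)) (Finset.mem_univ (Z ω))))
    exact ⟨rfl, rfl⟩
  have hMpos : 0 < M := (hω.trans_le (le_pr_aux p hp {ω' | X ω' = X ω} ω rfl)).trans_le (hle (X ω))
  have hc : (0 : ℝ) < Fintype.card 𝒵 := by exact_mod_cast Fintype.card_pos
  have h := Real.logb_le_logb_of_le (b := 2) (by norm_num) hSpos hSM
  rw [Real.logb_mul hc.ne' hMpos.ne'] at h
  linarith
end

section
/- Let Ω be a finite probability space, let S, Q : Ω → {0,1}ⁿ be random variables on the set of binary strings of length n (with the Hamming distance d), and let 0 < d_min ≤ n. Then the probability that Q lands within Hamming distance less than d_min of S satisfies P[d(Q, S) < d_min] ≤ |B| · 2^{−H̃∞(S | Q)}, where |B| = Σ_{k=0}^{d_min−1} C(n, k) is the cardinality of a Hamming ball of radius d_min (i.e., the set of strings at distance < d_min from a fixed string). -/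
open Finset Real

lemma ball_card_le (n dmin : ℕ) (y : Fin n → Bool) :
    (Finset.univ.filter fun x : Fin n → Bool => hammingDist y x < dmin).card ≤
      ∑ k ∈ Finset.range dmin, n.choose k := by
  calc (Finset.univ.filter fun x : Fin n → Bool => hammingDist y x < dmin).card
      ≤ ((Finset.range dmin).biUnion fun k =>
          Finset.powersetCard k (Finset.univ : Finset (Fin n))).card := by
        apply Finset.card_le_card_of_injOn (fun x => Finset.univ.filter fun i => y i ≠ x i)
        · intro x hx
          simpa [hammingDist] using hx
        · intro a _ b _ hab
          funext i
          have h := Finset.ext_iff.mp hab i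
          simp only [Finset.mem_filter, Finset.mem_univ, true_and] at h
          revert h
          cases y i <;> cases a i <;> cases b i <;> simp
    _ ≤ ∑ k ∈ Finset.range dmin,
          (Finset.powersetCard k (Finset.univ : Finset (Fin n))).card := Finset.card_biUnion_le
    _ = _ := by simp

lemma pr_nonneg' {Ω : Type*} [Fintype Ω] (p : Ω → ℝ) (hp : ∀ ω, 0 ≤ p ω) (E : Set Ω) :
    0 ≤ pr p E :=
  Finset.sum_nonneg fun ω _ => Set.indicator_nonneg (fun ω _ => hp ω) ω

lemma pr_mono' {Ω : Type*} [Fintype Ω] (p : Ω → ℝ) (hp : ∀ ω, 0 ≤ p ω) {E F : Set Ω}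
    (h : E ⊆ F) : pr p E ≤ pr p F :=
  Finset.sum_le_sum fun ω _ => Set.indicator_le_indicator_of_subset h hp ω

lemma joint_le {Ω 𝒳 𝒴 : Type*} [Fintype Ω] [Fintype 𝒳] [Nonempty 𝒳]
    (p : Ω → ℝ) (hp : ∀ ω, 0 ≤ p ω) (X : Ω → 𝒳) (Y : Ω → 𝒴) (x : 𝒳) (y : 𝒴) :
    pr p {ω | X ω = x ∧ Y ω = y} ≤ prEq p Y y *
      (Finset.univ.sup' Finset.univ_nonempty fun x : 𝒳 => condProb p X x Y y) := by
  by_cases h : prEq p Y y = 0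
  · rw [h, zero_mul, ← h]
    exact pr_mono' p hp fun ω hω => hω.2
  · have h1 : pr p {ω | X ω = x ∧ Y ω = y} = prEq p Y y * condProb p X x Y y := by
      rw [condProb, if_neg h]; field_simp
    rw [h1]
    exact mul_le_mul_of_nonneg_left
      (Finset.le_sup' (fun x : 𝒳 => condProb p X x Y y) (Finset.mem_univ x))
      (pr_nonneg' p hp _)

open Classical in
lemma pr_decomp {Ω 𝒳 𝒴 : Type*} [Fintype Ω] [Fintype 𝒳] [Fintype 𝒴]
    (p : Ω → ℝ) (X : Ω → 𝒳) (Y : Ω → 𝒴) (R : 𝒴 → 𝒳 → Prop) :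
    pr p {ω | R (Y ω) (X ω)} =
      ∑ y, ∑ x ∈ Finset.univ.filter (fun x => R y x), pr p {ω | X ω = x ∧ Y ω = y} := by
  unfold pr
  simp_rw [Finset.sum_filter]
  have : ∀ y x, (if R y x then ∑ ω, Set.indicator {ω | X ω = x ∧ Y ω = y} p ω else 0)
      = ∑ ω, if Y ω = y then (if X ω = x then (if R y x then p ω else 0) else 0) else 0 := by
    intro y x
    split_ifs with h
    · refine Finset.sum_congr rfl fun ω _ => ?_
      simp only [Set.indicator_apply, Set.mem_setOf_eq]
      split_ifs <;> simp_all
    · simp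
  simp_rw [this]
  have h2 : ∀ y, (∑ x, ∑ ω, if Y ω = y then (if X ω = x then (if R y x then p ω else 0) else 0)
      else 0) = ∑ ω, if Y ω = y then (if R y (X ω) then p ω else 0) else 0 := by
    intro y
    rw [Finset.sum_comm]
    refine Finset.sum_congr rfl fun ω _ => ?_
    split_ifs <;> simp_all
  simp_rw [h2]
  rw [Finset.sum_comm]
  refine Finset.sum_congr rfl fun ω _ => ?_
  simp [Set.indicator_apply]

theorem stmt_8 {Ω : Type*} [Fintype Ω] (n : ℕ)
    (p : Ω → ℝ) (hp : ∀ ω, 0 ≤ p ω) (hsum : ∑ ω, p ω = 1)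
    (S Q : Ω → (Fin n → Bool)) (dmin : ℕ) (hd0 : 0 < dmin) (hdn : dmin ≤ n) :
    pr p {ω | hammingDist (Q ω) (S ω) < dmin} ≤
      ((∑ k ∈ Finset.range dmin, n.choose k : ℕ) : ℝ) *
        (2 : ℝ) ^ (-(avgMinEntropy p S Q)) := by
  classical
  set A := ∑ y, prEq p Q y *
      (Finset.univ.sup' Finset.univ_nonempty fun x => condProb p S x Q y) with hA
  have key : ∀ (R : (Fin n → Bool) → (Fin n → Bool) → Prop) (N : ℕ),
      (∀ y, (Finset.univ.filter fun x => R y x).card ≤ N) →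
      pr p {ω | R (Q ω) (S ω)} ≤ (N : ℝ) * A := by
    intro R N hN
    rw [pr_decomp p S Q R, hA, Finset.mul_sum]
    refine Finset.sum_le_sum fun y _ => ?_
    refine (Finset.sum_le_card_nsmul _ _ _ fun x _ => joint_le p hp S Q x y).trans ?_
    rw [nsmul_eq_mul]
    refine mul_le_mul_of_nonneg_right ?_
      ((pr_nonneg' p hp _).trans (joint_le p hp S Q y y))
    have := hN y
    exact_mod_cast (by convert this)
  have hApos : 0 < A := by
    have h := key (fun _ _ => True) (Fintype.card (Fin n → Bool)) (fun y => Finset.card_le_univ _)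
    have h1 : pr p {ω : Ω | True} = 1 := by simp [pr, hsum]
    rw [h1] at h
    by_contra hc
    have := mul_nonpos_of_nonneg_of_nonpos
      (Nat.cast_nonneg (α := ℝ) (Fintype.card (Fin n → Bool))) (not_lt.mp hc)
    linarith
  have hpow : (2 : ℝ) ^ (-(avgMinEntropy p S Q)) = A := by
    rw [avgMinEntropy, neg_neg]
    exact Real.rpow_logb (by norm_num) (by norm_num) hApos
  rw [hpow]
  refine key (fun y x => hammingDist y x < dmin) _ fun y => ?_
  convert ball_card_le n dmin y
end
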